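/- Let B ⊂ ℝ³ be the open unit ball, let ρ0:[0,1]→[0,∞) be measurable and bounded, and let r:(0,1]→(0,∞) be measurable and nondecreasing. Define the radial deformation u(x) = r(‖x‖) x/‖x‖ for x ∈ B∖{0}. Then (1/2) ∫_B ∫_B ρ0(‖x‖) ρ0(‖y‖) / ‖u(x) − u(y)‖ dy dx = 4π ∫₀¹ ρ0(R) M_R r(R)⁻¹ R² dR, with equality in [0,∞]. -/

import Mathlib

open MeasureTheory Real Set Filter
open scoped ENNReal

/-- `M_R = 4π ∫₀^R ρ0(u) u² du`. -/
noncomputable def Mfun (ρ0 : ℝ → ℝ) (R : ℝ) : ℝ := 4 * π * ∫ u in (0:ℝ)..R, ρ0 u * u ^ 2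


abbrev E3 := EuclideanSpace ℝ (Fin 3)

lemma lintegral_ftc {g g' : ℝ → ℝ} {a b : ℝ} (hab : a ≤ b) (hcont : ContinuousOn g (Icc a b))
    (hderiv : ∀ x ∈ Ioo a b, HasDerivAt g (g' x) x) (hpos : ∀ x ∈ Ioo a b, 0 ≤ g' x) :
    ∫⁻ x in Ioo a b, ENNReal.ofReal (g' x) = ENNReal.ofReal (g b - g a) := by
  have hi := intervalIntegral.integrableOn_deriv_of_nonneg hcont hderiv hpos
  have h2 := intervalIntegral.integral_eq_sub_of_hasDerivAt_of_le hab hcont hderiv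
    ((intervalIntegrable_iff_integrableOn_Ioc_of_le hab).2 hi)
  rw [← h2, intervalIntegral.integral_of_le hab, integral_Ioc_eq_integral_Ioo,
    ofReal_integral_eq_lintegral_ofReal (hi.mono_set Ioo_subset_Ioc_self)]
  exact (ae_restrict_iff' measurableSet_Ioo).2 (Eventually.of_forall hpos)

lemma aux_pos {a b θ : ℝ} (ha : 0 < a) (hb : 0 < b) (hθ : θ ∈ Ioo 0 π) :
    0 < a ^ 2 + b ^ 2 - 2 * a * b * cos θ := by
  have h1 : cos θ < 1 := by
    have := cos_lt_cos_of_nonneg_of_le_pi (le_refl 0) hθ.2.le hθ.1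
    simpa using this
  nlinarith [sq_nonneg (a - b), mul_pos ha hb]

lemma theta_int {a b : ℝ} (ha : 0 < a) (hb : 0 < b) :
    ∫⁻ θ in Ioo 0 π, ENNReal.ofReal (sin θ / √(a ^ 2 + b ^ 2 - 2 * a * b * cos θ))
      = ENNReal.ofReal (2 / max a b) := by
  have := lintegral_ftc (g := fun θ => √(a ^ 2 + b ^ 2 - 2 * a * b * cos θ) / (a * b))
    (g' := fun θ => sin θ / √(a ^ 2 + b ^ 2 - 2 * a * b * cos θ)) pi_pos.le
    (by fun_prop) ?_ ?_
  · rw [this]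
    congr 1
    have e1 : a ^ 2 + b ^ 2 - 2 * a * b * cos π = (a + b) ^ 2 := by rw [cos_pi]; ring
    have e2 : a ^ 2 + b ^ 2 - 2 * a * b * cos 0 = (a - b) ^ 2 := by rw [cos_zero]; ring
    simp only [e1, e2]
    rw [sqrt_sq (by positivity), sqrt_sq_eq_abs]
    rcases le_total a b with h | h
    · rw [max_eq_right h, abs_of_nonpos (by linarith)]; field_simp; ring
    · rw [max_eq_left h, abs_of_nonneg (by linarith)]; field_simp; ring
  · intro θ hθ
    have hp := aux_pos ha hb hθ
    have h1 : HasDerivAt (fun θ => a ^ 2 + b ^ 2 - 2 * a * b * cos θ) (2 * a * b * sin θ) θ := by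
      have := ((hasDerivAt_cos θ).const_mul (2 * a * b)).const_sub (a ^ 2 + b ^ 2)
      exact this.congr_deriv (by ring)
    have h2 := (h1.sqrt hp.ne').div_const (a * b)
    refine h2.congr_deriv ?_
    have := sqrt_pos.2 hp
    field_simp
  · intro θ hθ
    have := sin_pos_of_mem_Ioo hθ
    positivity

lemma hT : MeasurePreserving (fun x : E3 => (x 0, (x 1, x 2))) volume volume := by
  have h1 := PiLp.volume_preserving_ofLp (Fin 3)
  have h2 := volume_preserving_piFinSuccAbove (fun _ : Fin 3 => ℝ) 0
  have h3 := volume_preserving_finTwoArrow ℝ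
  have h4 : MeasurePreserving (Prod.map (id : ℝ → ℝ) (MeasurableEquiv.finTwoArrow : (Fin 2 → ℝ) ≃ᵐ ℝ × ℝ)) volume volume :=
    (MeasurePreserving.id volume).prod h3
  exact h4.comp (h2.comp h1)

lemma planar (g : ℝ → ℝ≥0∞) (hg : Measurable g) :
    ∫⁻ p : ℝ × ℝ, g (p.1 ^ 2 + p.2 ^ 2) =
      ENNReal.ofReal (2 * π) * ∫⁻ s in Ioi (0:ℝ), ENNReal.ofReal s * g (s ^ 2) := by
  rw [← lintegral_comp_polarCoord_symm]
  simp only [polarCoord_target, polarCoord_symm_apply, smul_eq_mul]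
  rw [Measure.volume_eq_prod, setLIntegral_prod _ (by fun_prop)]
  have : ∀ x y : ℝ, (x * cos y) ^ 2 + (x * sin y) ^ 2 = x ^ 2 := by
    intro x y
    linear_combination x ^ 2 * sin_sq_add_cos_sq y
  simp only [this, lintegral_const, Measure.restrict_apply_univ, volume_Ioo]
  rw [lintegral_mul_const _ (by fun_prop), mul_comm]
  congr 2; ring

lemma spherical (f : ℝ → ℝ → ℝ≥0∞) (hf : Measurable (Function.uncurry f)) :
    ∫⁻ x : E3, f ‖x‖ (x 0) = ENNReal.ofReal (2 * π) *
      ∫⁻ R in Ioi (0:ℝ), ∫⁻ θ in Ioo 0 π, ENNReal.ofReal (R ^ 2 * sin θ) * f R (R * cos θ) := by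
  have hf' : ∀ {α : Type} [MeasurableSpace α] {u v : α → ℝ}, Measurable u → Measurable v →
      Measurable (fun x => f (u x) (v x)) := fun hu hv => hf.comp (hu.prodMk hv)
  have e1 : ∫⁻ x : E3, f ‖x‖ (x 0) =
      ∫⁻ p : ℝ × (ℝ × ℝ), f (√(p.1 ^ 2 + (p.2.1 ^ 2 + p.2.2 ^ 2))) p.1 := by
    rw [← hT.lintegral_comp (hf' (by fun_prop) (by fun_prop))]
    simp [EuclideanSpace.norm_eq, Fin.sum_univ_three, add_assoc]
  have hm : Measurable fun p : ℝ × ℝ =>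
      (Ioi (0:ℝ)).indicator (fun s => ENNReal.ofReal s * f (√(p.1 ^ 2 + s ^ 2)) p.1) p.2 := by
    have : (fun p : ℝ × ℝ =>
      (Ioi (0:ℝ)).indicator (fun s => ENNReal.ofReal s * f (√(p.1 ^ 2 + s ^ 2)) p.1) p.2)
      = (Prod.snd ⁻¹' (Ioi (0:ℝ))).indicator
        (fun p : ℝ × ℝ => ENNReal.ofReal p.2 * f (√(p.1 ^ 2 + p.2 ^ 2)) p.1) := by
      ext p; simp [indicator]
    rw [this]
    refine Measurable.indicator ?_ (measurable_snd measurableSet_Ioi)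
    exact Measurable.mul (by fun_prop) (hf' (by fun_prop) (by fun_prop))
  have e2 : ∫⁻ p : ℝ × (ℝ × ℝ), f (√(p.1 ^ 2 + (p.2.1 ^ 2 + p.2.2 ^ 2))) p.1 =
      ENNReal.ofReal (2 * π) * ∫⁻ p : ℝ × ℝ,
        (Ioi (0:ℝ)).indicator (fun s => ENNReal.ofReal s * f (√(p.1 ^ 2 + s ^ 2)) p.1) p.2 := by
    rw [Measure.volume_eq_prod, lintegral_prod _ (hf' (by fun_prop) (by fun_prop)).aemeasurable,
      Measure.volume_eq_prod, lintegral_prod _ hm.aemeasurable,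
      ← lintegral_const_mul _ (Measurable.lintegral_prod_right' hm)]
    congr 1; ext z
    dsimp only
    rw [lintegral_indicator measurableSet_Ioi,
      ← planar (fun t => f (√(z ^ 2 + t)) z) (hf' (by fun_prop) (by fun_prop))]
    rfl
  rw [e1, e2, ← lintegral_comp_polarCoord_symm]
  simp only [polarCoord_target, polarCoord_symm_apply, smul_eq_mul]
  congr 1
  have hm2 : Measurable (fun p : ℝ × ℝ => (p.1 * cos p.2, p.1 * sin p.2)) := by fun_prop
  have hm3 : Measurable fun p : ℝ × ℝ => ENNReal.ofReal p.1 *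
        (Ioi 0).indicator (fun s => ENNReal.ofReal s * f (√((p.1 * cos p.2) ^ 2 + s ^ 2)) (p.1 * cos p.2))
          (p.1 * sin p.2) := Measurable.mul (by fun_prop) (hm.comp hm2)
  rw [Measure.volume_eq_prod, setLIntegral_prod _ hm3.aemeasurable]
  refine setLIntegral_congr_fun measurableSet_Ioi fun R hR => ?_
  have hR : 0 < R := hR
  have hss : Ioo 0 π ⊆ Ioo (-π) π := Ioo_subset_Ioo_left (by linarith [pi_pos])
  simp only
  rw [← lintegral_indicator measurableSet_Ioo, ← lintegral_indicator measurableSet_Ioo]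
  congr 1; ext θ
  by_cases h : θ ∈ Ioo 0 π
  · have hs := sin_pos_of_mem_Ioo h
    rw [indicator_of_mem h, indicator_of_mem (hss h), indicator_of_mem (mem_Ioi.2 (mul_pos hR hs))]
    rw [← mul_assoc, ← ENNReal.ofReal_mul hR.le]
    have : (R * cos θ) ^ 2 + (R * sin θ) ^ 2 = R ^ 2 := by
      linear_combination R ^ 2 * sin_sq_add_cos_sq θ
    rw [this, sqrt_sq hR.le]
    congr 2; ring
  · rw [indicator_of_notMem h]
    by_cases h' : θ ∈ Ioo (-π) π
    · rw [indicator_of_mem h', indicator_of_notMem, mul_zero]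
      have : sin θ ≤ 0 := by
        apply sin_nonpos_of_nonpos_of_neg_pi_le _ h'.1.le
        by_contra h0; exact h ⟨not_le.1 h0, h'.2⟩
      simp only [mem_Ioi, not_lt]
      exact mul_nonpos_of_nonneg_of_nonpos hR.le this
    · rw [indicator_of_notMem h']

lemma spherical' (f : ℝ → ℝ → ℝ≥0∞) (hf : Measurable (Function.uncurry f)) (x : E3) :
    ∫⁻ y : E3, f ‖y‖ (inner ℝ x y) = ENNReal.ofReal (2 * π) *
      ∫⁻ R in Ioi (0:ℝ), ∫⁻ θ in Ioo 0 π,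
        ENNReal.ofReal (R ^ 2 * sin θ) * f R (‖x‖ * R * cos θ) := by
  let w : E3 := EuclideanSpace.single 0 ‖x‖
  have hw : ‖w‖ = ‖x‖ := by simp [w]
  let T := (Submodule.span ℝ {w - x})ᗮ.reflection
  have hTw : T w = x := Submodule.reflection_sub hw
  have e : ∫⁻ y : E3, f ‖y‖ (inner ℝ x y) = ∫⁻ y : E3, f ‖y‖ (‖x‖ * y 0) := by
    rw [← T.measurePreserving.lintegral_comp_emb T.toHomeomorph.measurableEmbedding]
    congr 1; ext y
    rw [T.norm_map]
    nth_rw 1 [← hTw]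
    rw [T.inner_map_map]
    congr 1
    simp [w, EuclideanSpace.inner_single_left, mul_comm]
  rw [e, spherical (fun a b => f a (‖x‖ * b)) (hf.comp (by fun_prop : Measurable fun p : ℝ × ℝ => (p.1, ‖x‖ * p.2)))]
  simp only [mul_assoc]

lemma radial (g : ℝ → ℝ≥0∞) (hg : Measurable g) :
    ∫⁻ x : E3, g ‖x‖ = ENNReal.ofReal (4 * π) *
      ∫⁻ R in Ioi (0:ℝ), ENNReal.ofReal (R ^ 2) * g R := by
  rw [spherical (fun a _ => g a) (hg.comp measurable_fst)]
  have hs : ∫⁻ θ in Ioo 0 π, ENNReal.ofReal (sin θ) = 2 := by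
    rw [lintegral_ftc (g := fun θ => - cos θ) pi_pos.le (by fun_prop) (fun x _ => (hasDerivAt_cos x).neg.congr_deriv (neg_neg _))
      (fun x hx => (sin_pos_of_mem_Ioo hx).le)]
    norm_num
  have : ∀ R : ℝ, ∫⁻ θ in Ioo 0 π, ENNReal.ofReal (R ^ 2 * sin θ) * g R =
      2 * (ENNReal.ofReal (R ^ 2) * g R) := by
    intro R
    rw [lintegral_mul_const _ (by fun_prop)]
    simp_rw [ENNReal.ofReal_mul (sq_nonneg R)]
    rw [lintegral_const_mul _ (by fun_prop), hs]
    ring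
  simp_rw [this]
  rw [lintegral_const_mul _ (by fun_prop), ← mul_assoc]
  congr 1
  rw [show (2 : ℝ≥0∞) = ENNReal.ofReal 2 by simp, ← ENNReal.ofReal_mul (by positivity)]
  congr 1; ring

lemma norm_formula {x y : E3} (hx : x ≠ 0) (hy : y ≠ 0) (a b : ℝ) :
    ‖(a / ‖x‖) • x - (b / ‖y‖) • y‖ =
      √(a ^ 2 + b ^ 2 - 2 * a * b * (inner ℝ x y / (‖x‖ * ‖y‖))) := by
  have hx' : ‖x‖ ≠ 0 := norm_ne_zero_iff.2 hx
  have hy' : ‖y‖ ≠ 0 := norm_ne_zero_iff.2 hy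
  rw [← sqrt_sq (norm_nonneg ((a / ‖x‖) • x - (b / ‖y‖) • y)), norm_sub_sq_real, norm_smul,
    norm_smul, inner_smul_left, inner_smul_right, mul_pow, mul_pow, norm_eq_abs, norm_eq_abs,
    sq_abs, sq_abs]
  congr 1
  simp only [conj_trivial]
  field_simp
  ring

lemma Ioi_ind (h : ℝ → ℝ≥0∞) :
    ∫⁻ R in Ioi (0:ℝ), (Iio (1:ℝ)).indicator h R = ∫⁻ R in Ioo (0:ℝ) 1, h R := by
  rw [setLIntegral_indicator measurableSet_Iio, inter_comm, Ioi_inter_Iio]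

lemma ball_ind (h : E3 → ℝ≥0∞) :
    ∫⁻ y in Metric.ball (0 : E3) 1, h y =
      ∫⁻ y, (Metric.ball (0 : E3) 1).indicator h y :=
  (lintegral_indicator measurableSet_ball _).symm

lemma inner_int (ρ0 : ℝ → ℝ) (hρmeas : Measurable ρ0)
    (hρ : ∀ R ∈ Icc (0:ℝ) 1, 0 ≤ ρ0 R)
    (r : ℝ → ℝ) (hrmeas : Measurable r)
    (hrpos : ∀ R ∈ Ioc (0:ℝ) 1, 0 < r R) {x : E3} (hx : x ≠ 0) (hx1 : ‖x‖ < 1) :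
    ∫⁻ y in Metric.ball (0 : E3) 1,
            ENNReal.ofReal (ρ0 ‖x‖ * ρ0 ‖y‖ /
              ‖(r ‖x‖ / ‖x‖) • x - (r ‖y‖ / ‖y‖) • y‖) =
    ENNReal.ofReal (4 * π) * ∫⁻ S in Ioo (0:ℝ) 1,
      ENNReal.ofReal (S ^ 2 * (ρ0 ‖x‖ * ρ0 S / max (r ‖x‖) (r S))) := by
  have hx0 : 0 < ‖x‖ := norm_pos_iff.2 hx
  set a := r ‖x‖ with ha
  have hapos : 0 < a := hrpos _ ⟨hx0, hx1.le⟩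
  let f : ℝ → ℝ → ℝ≥0∞ := fun S t => (Iio (1:ℝ)).indicator (fun S => ENNReal.ofReal (ρ0 ‖x‖ * ρ0 S /
    √(a ^ 2 + (r S) ^ 2 - 2 * a * (r S) * (t / (‖x‖ * S))))) S
  have hf : Measurable (Function.uncurry f) := by
    have : Function.uncurry f = (Prod.fst ⁻¹' (Iio (1:ℝ))).indicator
        (fun p : ℝ × ℝ => ENNReal.ofReal (ρ0 ‖x‖ * ρ0 p.1 /
          √(a ^ 2 + (r p.1) ^ 2 - 2 * a * (r p.1) * (p.2 / (‖x‖ * p.1))))) := by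
      ext p; simp [f, Function.uncurry, indicator]
    rw [this]
    refine Measurable.indicator ?_ (measurable_fst measurableSet_Iio)
    fun_prop
  have e1 : ∫⁻ y in Metric.ball (0 : E3) 1,
            ENNReal.ofReal (ρ0 ‖x‖ * ρ0 ‖y‖ /
              ‖(a / ‖x‖) • x - (r ‖y‖ / ‖y‖) • y‖) = ∫⁻ y, f ‖y‖ (inner ℝ x y) := by
    rw [ball_ind]
    apply lintegral_congr_ae
    have h0 : ∀ᵐ y : E3, y ≠ 0 := by simp [ae_iff]
    filter_upwards [h0] with y hy
    by_cases h : ‖y‖ < 1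
    · rw [indicator_of_mem (by simpa using h)]
      simp only [f]
      rw [indicator_of_mem (mem_Iio.2 h), norm_formula hx hy]
    · rw [indicator_of_notMem (by simpa using h)]
      simp only [f]
      rw [indicator_of_notMem (by simpa using h)]
  rw [e1, spherical' f hf x]
  have e2 : ∫⁻ R in Ioi (0:ℝ), ∫⁻ θ in Ioo 0 π,
        ENNReal.ofReal (R ^ 2 * sin θ) * f R (‖x‖ * R * cos θ) =
      ∫⁻ R in Ioi (0:ℝ), (Iio (1:ℝ)).indicator (fun S => ENNReal.ofReal 2 *
        ENNReal.ofReal (S ^ 2 * (ρ0 ‖x‖ * ρ0 S / max a (r S)))) R := by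
    refine setLIntegral_congr_fun measurableSet_Ioi fun R hR => ?_
    have hR : 0 < R := hR
    by_cases h : R < 1
    · have hb := hrpos R ⟨hR, h.le⟩
      have hρx := hρ ‖x‖ ⟨hx0.le, hx1.le⟩
      have hρR := hρ R ⟨hR.le, h.le⟩
      rw [indicator_of_mem (mem_Iio.2 h)]
      simp only [f]
      simp_rw [indicator_of_mem (mem_Iio.2 h)]
      have : ∀ θ ∈ Ioo 0 π, ENNReal.ofReal (R ^ 2 * sin θ) * ENNReal.ofReal (ρ0 ‖x‖ * ρ0 R /
          √(a ^ 2 + (r R) ^ 2 - 2 * a * (r R) * (‖x‖ * R * cos θ / (‖x‖ * R)))) =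
          ENNReal.ofReal (R ^ 2 * (ρ0 ‖x‖ * ρ0 R)) *
          ENNReal.ofReal (sin θ / √(a ^ 2 + (r R) ^ 2 - 2 * a * (r R) * cos θ)) := by
        intro θ hθ
        have hs := (sin_pos_of_mem_Ioo hθ).le
        rw [mul_div_cancel_left₀ _ (by positivity), ← ENNReal.ofReal_mul (by positivity),
          ← ENNReal.ofReal_mul (by positivity)]
        congr 1; ring
      rw [setLIntegral_congr_fun measurableSet_Ioo this, lintegral_const_mul _ (by fun_prop),
        theta_int hapos hb,
        ← ENNReal.ofReal_mul (by positivity), ← ENNReal.ofReal_mul (by positivity)]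
      congr 1; ring
    · rw [indicator_of_notMem (by simpa using h)]
      simp only [f]
      simp_rw [indicator_of_notMem (show R ∉ Iio (1:ℝ) by simpa using h)]
      simp
  rw [e2, Ioi_ind, lintegral_const_mul _ (by fun_prop), ← mul_assoc]
  congr 1
  rw [← ENNReal.ofReal_mul (by positivity)]
  congr 1; ring

lemma sym_int (K : ℝ → ℝ → ℝ≥0∞) (hK : Measurable (Function.uncurry K))
    (hsym : ∀ R S, K R S = K S R) :
    ∫⁻ R in Ioo (0:ℝ) 1, ∫⁻ S in Ioo (0:ℝ) 1, K R S =
      2 * ∫⁻ R in Ioo (0:ℝ) 1, ∫⁻ S in Ioo (0:ℝ) R, K R S := by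
  let A : ℝ → ℝ → ℝ≥0∞ := fun R S => (Iio R).indicator (K R) S
  have hA : Measurable (Function.uncurry A) := by
    have : Function.uncurry A = {p : ℝ × ℝ | p.2 < p.1}.indicator (Function.uncurry K) := by
      ext p; simp [A, Function.uncurry, indicator]
    rw [this]
    exact hK.indicator (measurableSet_lt measurable_snd measurable_fst)
  have hA' : Measurable (Function.uncurry fun R S => A S R) := hA.comp measurable_swap
  have e1 : ∀ R, ∫⁻ S in Ioo (0:ℝ) 1, K R S =
      (∫⁻ S in Ioo (0:ℝ) 1, A R S) + ∫⁻ S in Ioo (0:ℝ) 1, A S R := by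
    intro R
    have hAR : Measurable (fun S => A R S) := hA.comp (measurable_const.prodMk measurable_id)
    rw [← lintegral_add_left hAR]
    apply lintegral_congr_ae
    have h0 : ∀ᵐ S : ℝ, S ≠ R := by simp [ae_iff]
    filter_upwards [ae_restrict_of_ae h0] with S hS
    rcases lt_or_gt_of_ne hS with h | h
    · simp [A, indicator, h, not_lt.2 h.le]
    · simp [A, indicator, h, not_lt.2 h.le, hsym R S]
  simp_rw [e1]
  have hAI : Measurable fun R => ∫⁻ S in Ioo (0:ℝ) 1, A R S := Measurable.lintegral_prod_right' hA
  rw [lintegral_add_left hAI,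
    lintegral_lintegral_swap (f := fun R S => A S R) hA'.aemeasurable, ← two_mul]
  congr 1
  refine setLIntegral_congr_fun measurableSet_Ioo fun R hR => ?_
  simp only [A]
  rw [setLIntegral_indicator measurableSet_Iio]
  congr 2
  ext S; simp only [mem_inter_iff, mem_Iio, mem_Ioo]
  constructor
  · rintro ⟨h1, h2, h3⟩; exact ⟨h2, h1⟩
  · rintro ⟨h1, h2⟩; exact ⟨h2, h1, h2.trans hR.2⟩

theorem stmt18 (ρ0 : ℝ → ℝ) (hρmeas : Measurable ρ0) (k1 : ℝ)
    (hρ : ∀ R ∈ Icc (0:ℝ) 1, 0 ≤ ρ0 R ∧ ρ0 R ≤ k1)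
    (r : ℝ → ℝ) (hrmeas : Measurable r)
    (hrpos : ∀ R ∈ Ioc (0:ℝ) 1, 0 < r R) (hrmono : MonotoneOn r (Ioc (0:ℝ) 1)) :
    (1/2 : ℝ≥0∞) *
        ∫⁻ x in Metric.ball (0 : EuclideanSpace ℝ (Fin 3)) 1,
          ∫⁻ y in Metric.ball (0 : EuclideanSpace ℝ (Fin 3)) 1,
            ENNReal.ofReal (ρ0 ‖x‖ * ρ0 ‖y‖ /
              ‖(r ‖x‖ / ‖x‖) • x - (r ‖y‖ / ‖y‖) • y‖) =
      ENNReal.ofReal (4 * π) *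
        ∫⁻ R in Ioo (0:ℝ) 1, ENNReal.ofReal (ρ0 R * Mfun ρ0 R * (r R)⁻¹ * R ^ 2) := by
  let G : ℝ → ℝ≥0∞ := fun R => ∫⁻ S in Ioo (0:ℝ) 1,
      ENNReal.ofReal (S ^ 2 * (ρ0 R * ρ0 S / max (r R) (r S)))
  have hG : Measurable G := by
    refine Measurable.lintegral_prod_right' (f := fun p : ℝ × ℝ =>
      ENNReal.ofReal (p.2 ^ 2 * (ρ0 p.1 * ρ0 p.2 / max (r p.1) (r p.2)))) ?_
    fun_prop
  let K : ℝ → ℝ → ℝ≥0∞ := fun R S =>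
    ENNReal.ofReal (R ^ 2 * (S ^ 2 * (ρ0 R * ρ0 S / max (r R) (r S))))
  have hK : Measurable (Function.uncurry K) := by
    have : Function.uncurry K = fun p : ℝ × ℝ =>
      ENNReal.ofReal (p.1 ^ 2 * (p.2 ^ 2 * (ρ0 p.1 * ρ0 p.2 / max (r p.1) (r p.2)))) := rfl
    rw [this]
    fun_prop
  have hKs : ∀ R S, K R S = K S R := by
    intro R S
    simp only [K]
    rw [max_comm]
    congr 1; ring
  have e1 : ∫⁻ x in Metric.ball (0 : E3) 1, ∫⁻ y in Metric.ball (0 : E3) 1,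
            ENNReal.ofReal (ρ0 ‖x‖ * ρ0 ‖y‖ /
              ‖(r ‖x‖ / ‖x‖) • x - (r ‖y‖ / ‖y‖) • y‖) =
      ∫⁻ x : E3, (fun R => ENNReal.ofReal (4 * π) * (Iio (1:ℝ)).indicator G R) ‖x‖ := by
    rw [ball_ind]
    apply lintegral_congr_ae
    have h0 : ∀ᵐ y : E3, y ≠ 0 := by simp [ae_iff]
    filter_upwards [h0] with x hx
    by_cases h : ‖x‖ < 1
    · rw [indicator_of_mem (by simpa using h), indicator_of_mem (mem_Iio.2 h),
        inner_int ρ0 hρmeas (fun R hR => (hρ R hR).1) r hrmeas hrpos hx h]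
    · rw [indicator_of_notMem (by simpa using h), indicator_of_notMem (by simpa using h), mul_zero]
  have hGi : Measurable ((Iio (1:ℝ)).indicator G) := hG.indicator measurableSet_Iio
  have e2 : ∫⁻ R in Ioi (0:ℝ), ENNReal.ofReal (R ^ 2) *
      (ENNReal.ofReal (4 * π) * (Iio (1:ℝ)).indicator G R) =
      ENNReal.ofReal (4 * π) * ∫⁻ R in Ioo (0:ℝ) 1, ∫⁻ S in Ioo (0:ℝ) 1, K R S := by
    have hKI : Measurable fun R => ∫⁻ S in Ioo (0:ℝ) 1, K R S := Measurable.lintegral_prod_right' hK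
    rw [← Ioi_ind, ← lintegral_const_mul _ (hKI.indicator measurableSet_Iio)]
    congr 1; ext R
    rw [mul_left_comm]
    congr 1
    simp only [indicator]
    split_ifs with h
    · simp only [G, K]
      simp_rw [ENNReal.ofReal_mul (sq_nonneg R)]
      rw [lintegral_const_mul _ (by fun_prop)]
    · simp
  rw [e1, radial (fun R => ENNReal.ofReal (4 * π) * (Iio (1:ℝ)).indicator G R) (by fun_prop), e2, sym_int K hK hKs]
  have e3 : ENNReal.ofReal (4 * π) * ∫⁻ R in Ioo (0:ℝ) 1, ∫⁻ S in Ioo (0:ℝ) R, K R S =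
      ∫⁻ R in Ioo (0:ℝ) 1, ENNReal.ofReal (ρ0 R * Mfun ρ0 R * (r R)⁻¹ * R ^ 2) := by
    rw [← lintegral_const_mul' _ _ ENNReal.ofReal_ne_top]
    refine setLIntegral_congr_fun measurableSet_Ioo fun R hR => ?_
    have hrR := hrpos R ⟨hR.1, hR.2.le⟩
    have hρR := (hρ R ⟨hR.1.le, hR.2.le⟩).1
    have hKe : ∀ S ∈ Ioo (0:ℝ) R, K R S = ENNReal.ofReal (R ^ 2 * ρ0 R * (r R)⁻¹) *
        ENNReal.ofReal (ρ0 S * S ^ 2) := by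
      intro S hS
      have hm := hrmono ⟨hS.1, hS.2.le.trans hR.2.le⟩ ⟨hR.1, hR.2.le⟩ hS.2.le
      simp only [K]
      rw [max_eq_left hm, ← ENNReal.ofReal_mul (by positivity)]
      congr 1; ring
    have hint : IntegrableOn (fun S => ρ0 S * S ^ 2) (Ioo 0 R) := by
      refine Measure.integrableOn_of_bounded (M := k1) (by simp) (by fun_prop) ?_
      refine (ae_restrict_iff' measurableSet_Ioo).2 (Eventually.of_forall fun S hS => ?_)
      obtain ⟨h1, h2⟩ := hρ S ⟨hS.1.le, hS.2.le.trans hR.2.le⟩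
      have hS1 : S ^ 2 ≤ 1 := by nlinarith [hS.1, hS.2, hR.2]
      rw [norm_of_nonneg (by positivity)]
      nlinarith
    have hnn : 0 ≤ᵐ[volume.restrict (Ioo 0 R)] (fun S => ρ0 S * S ^ 2) := by
      refine (ae_restrict_iff' measurableSet_Ioo).2 (Eventually.of_forall fun S hS => ?_)
      have h1 := (hρ S ⟨hS.1.le, hS.2.le.trans hR.2.le⟩).1
      exact mul_nonneg h1 (sq_nonneg _)
    rw [setLIntegral_congr_fun measurableSet_Ioo hKe, lintegral_const_mul _ (by fun_prop),
      ← ofReal_integral_eq_lintegral_ofReal hint hnn, ← ENNReal.ofReal_mul (by positivity),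
      ← ENNReal.ofReal_mul (by positivity), Mfun, intervalIntegral.integral_of_le hR.1.le,
      integral_Ioc_eq_integral_Ioo]
    congr 1; ring
  rw [← e3]
  have h2 : (1/2 : ℝ≥0∞) * 2 = 1 := by
    rw [one_div]; exact ENNReal.inv_mul_cancel (by simp) (by simp)
  generalize ∫⁻ R in Ioo (0:ℝ) 1, ∫⁻ S in Ioo (0:ℝ) R, K R S = I
  generalize ENNReal.ofReal (4 * π) = c
  calc (1/2 : ℝ≥0∞) * (c * (c * (2 * I))) = ((1/2 : ℝ≥0∞) * 2) * (c * (c * I)) := by ring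
    _ = _ := by rw [h2, one_mul]
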